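/- I₃₃₂₂ ≤ 1/4 is a dimension witness for qutrits: let ρ be a bipartite quantum state on ι_A × ι_B where at least one of the local dimensions is at most 2 (i.e. the cardinality of ι_A or of ι_B is ≤ 2), and let M_{1|x} (x ∈ {1,2,3}) be Hermitian idempotent matrices on ι_A and N_{1|y} (y ∈ {1,2,3}) Hermitian idempotent matrices on ι_B. Then the value of the Collins–Gisin expression satisfies I₃₃₂₂ ≤ 1/4; hence any observed value exceeding 1/4 certifies that both local Hilbert space dimensions are at least 3. -/

import Mathlib

open Matrix
open scoped Kronecker ComplexOrder

/-- Partial transpose on the first tensor factor. -/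
def ptA {ιA ιB : Type*} (ρ : Matrix (ιA × ιB) (ιA × ιB) ℂ) : Matrix (ιA × ιB) (ιA × ιB) ℂ :=
  fun p q => ρ (q.1, p.2) (p.1, q.2)

/-- Sum of the absolute values of the negative eigenvalues of a Hermitian matrix
(0 if the matrix is not Hermitian). -/
noncomputable def negEig {ι : Type*} [Fintype ι] [DecidableEq ι] (M : Matrix ι ι ℂ) : ℝ :=
  letI := Classical.dec M.IsHermitian
  if h : M.IsHermitian then ∑ i, max 0 (-(h.eigenvalues i)) else 0

/-- Marginal probability of outcome 1 for Alice's projection Mx. -/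
noncomputable def margA {ιA ιB : Type*} [Fintype ιA] [Fintype ιB] [DecidableEq ιB]
    (ρ : Matrix (ιA × ιB) (ιA × ιB) ℂ) (Mx : Matrix ιA ιA ℂ) : ℝ :=
  (Matrix.trace (ρ * (Mx ⊗ₖ (1 : Matrix ιB ιB ℂ)))).re

/-- Marginal probability of outcome 1 for Bob's projection Ny. -/
noncomputable def margB {ιA ιB : Type*} [Fintype ιA] [Fintype ιB] [DecidableEq ιA]
    (ρ : Matrix (ιA × ιB) (ιA × ιB) ℂ) (Ny : Matrix ιB ιB ℂ) : ℝ :=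
  (Matrix.trace (ρ * ((1 : Matrix ιA ιA ℂ) ⊗ₖ Ny))).re

/-- Joint probability of outcomes (1,1) for projections Mx, Ny. -/
noncomputable def jointP {ιA ιB : Type*} [Fintype ιA] [Fintype ιB]
    (ρ : Matrix (ιA × ιB) (ιA × ιB) ℂ) (Mx : Matrix ιA ιA ℂ) (Ny : Matrix ιB ιB ℂ) : ℝ :=
  (Matrix.trace (ρ * (Mx ⊗ₖ Ny))).re

/-- The Collins–Gisin I₃₃₂₂ expression for a bipartite state ρ and projections
M x, N y onto outcome 1 of the three settings of Alice resp. Bob. -/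
noncomputable def I3322Value {ιA ιB : Type*} [Fintype ιA] [Fintype ιB]
    [DecidableEq ιA] [DecidableEq ιB]
    (ρ : Matrix (ιA × ιB) (ιA × ιB) ℂ)
    (M : Fin 3 → Matrix ιA ιA ℂ) (N : Fin 3 → Matrix ιB ιB ℂ) : ℝ :=
  -2 * margA ρ (M 0) - margA ρ (M 1) - margB ρ (N 0)
    + jointP ρ (M 0) (N 0) + jointP ρ (M 0) (N 1) + jointP ρ (M 0) (N 2)
    + jointP ρ (M 1) (N 0) + jointP ρ (M 1) (N 1) - jointP ρ (M 1) (N 2)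
    + jointP ρ (M 2) (N 0) - jointP ρ (M 2) (N 1)

section RealPart

variable {E : Type*} [NormedAddCommGroup E] [InnerProductSpace ℝ E]

/-- The correlation form of a pure two-qubit state with local Bloch vector `r`. -/
noncomputable def lf (q : ℝ) (r a b : E) : ℝ :=
  q * inner ℝ a b + inner ℝ r a * inner ℝ r b / (1 + q)

/-- Expectation of a product of two local observables. -/
noncomputable def cf (q : ℝ) (r : E) (α : ℝ) (a : E) (β : ℝ) (b : E) : ℝ :=
  α * β + α * inner ℝ r b + β * inner ℝ r a + lf q r a b

theorem lf_comm (q : ℝ) (r a b : E) : lf q r a b = lf q r b a := by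
  unfold lf; rw [real_inner_comm]; ring

theorem lf_add_left (q : ℝ) (r a a' b : E) : lf q r (a + a') b = lf q r a b + lf q r a' b := by
  unfold lf; simp only [inner_add_left, inner_add_right]; ring

theorem lf_smul_left (q : ℝ) (r a b : E) (k : ℝ) : lf q r (k • a) b = k * lf q r a b := by
  unfold lf; simp only [real_inner_smul_left, real_inner_smul_right]; ring

theorem lf_neg_left (q : ℝ) (r a b : E) : lf q r (-a) b = - lf q r a b := by
  unfold lf; simp only [inner_neg_left, inner_neg_right]; ring

theorem lf_sub_left (q : ℝ) (r a a' b : E) : lf q r (a - a') b = lf q r a b - lf q r a' b := by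
  rw [sub_eq_add_neg, lf_add_left, lf_neg_left]; ring

theorem lf_add_right (q : ℝ) (r a b b' : E) : lf q r a (b + b') = lf q r a b + lf q r a b' := by
  simp only [lf_comm q r a, lf_add_left]

theorem lf_sub_right (q : ℝ) (r a b b' : E) : lf q r a (b - b') = lf q r a b - lf q r a b' := by
  simp only [lf_comm q r a, lf_sub_left]

theorem lf_neg_right (q : ℝ) (r a b : E) : lf q r a (-b) = - lf q r a b := by
  simp only [lf_comm q r a, lf_neg_left]

theorem lf_smul_right (q : ℝ) (r a b : E) (k : ℝ) : lf q r a (k • b) = k * lf q r a b := by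
  simp only [lf_comm q r a, lf_smul_left]

theorem lf_zero_left (q : ℝ) (r b : E) : lf q r 0 b = 0 := by simp [lf]
theorem lf_zero_right (q : ℝ) (r b : E) : lf q r b 0 = 0 := by simp [lf]

/-- The operator whose form is `lf`. -/
noncomputable def lop (q : ℝ) (r b : E) : E := q • b + (inner ℝ r b / (1 + q)) • r

theorem inner_lop (q : ℝ) (r a b : E) : inner ℝ a (lop q r b) = lf q r a b := by
  unfold lop lf
  simp only [inner_add_right, real_inner_smul_right]
  rw [real_inner_comm r a]; ring

theorem inner_r_lop {q : ℝ} {r : E} (hq : 0 ≤ q) (h : q ^ 2 + ‖r‖ ^ 2 = 1) (b : E) :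
    inner ℝ r (lop q r b) = inner ℝ r b := by
  unfold lop
  simp only [inner_add_right, real_inner_smul_right, real_inner_self_eq_norm_sq]
  have : ‖r‖ ^ 2 = (1 - q) * (1 + q) := by linarith
  rw [this]
  have : (1 + q) ≠ 0 := by positivity
  field_simp; ring

theorem norm_lop {q : ℝ} {r : E} (hq : 0 ≤ q) (h : q ^ 2 + ‖r‖ ^ 2 = 1) (b : E) :
    ‖lop q r b‖ ^ 2 = q ^ 2 * ‖b‖ ^ 2 + (inner ℝ r b) ^ 2 := by
  have h1 : ‖lop q r b‖ ^ 2 = inner ℝ (lop q r b) (lop q r b) := by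
    rw [real_inner_self_eq_norm_sq]
  have h2 : lop q r b = q • b + (inner ℝ r b / (1 + q)) • r := rfl
  rw [h1]
  nth_rw 1 [h2]
  rw [inner_add_left, real_inner_smul_left, real_inner_smul_left, inner_r_lop hq h, inner_lop]
  unfold lf
  rw [real_inner_self_eq_norm_sq]
  have : (1 + q) ≠ 0 := by positivity
  field_simp; ring

theorem lf_sq_le {q : ℝ} {r : E} (hq : 0 ≤ q) (h : q ^ 2 + ‖r‖ ^ 2 = 1) (a b : E) (hb : ‖b‖ ≤ 1) :
    (lf q r a b) ^ 2 ≤ q ^ 2 * ‖a‖ ^ 2 + (inner ℝ r a) ^ 2 := by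
  rw [← norm_lop hq h, lf_comm, ← inner_lop]
  have h1 := abs_real_inner_le_norm b (lop q r a)
  have h2 : ‖b‖ * ‖lop q r a‖ ≤ ‖lop q r a‖ := by nlinarith [norm_nonneg (lop q r a)]
  rw [← sq_abs]
  exact pow_le_pow_left₀ (abs_nonneg _) (h1.trans h2) 2

theorem inner_sq_le (r a : E) : (inner ℝ r a) ^ 2 ≤ ‖r‖ ^ 2 * ‖a‖ ^ 2 := by
  have h1 := abs_real_inner_le_norm r a
  rw [← sq_abs, ← mul_pow]
  exact pow_le_pow_left₀ (abs_nonneg _) h1 2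

/-- Bessel inequality for two orthogonal vectors. -/
theorem bessel_two (r S d : E) (hS : inner ℝ S d = (0 : ℝ)) :
    ‖d‖ ^ 2 * (inner ℝ r S) ^ 2 + ‖S‖ ^ 2 * (inner ℝ r d) ^ 2 ≤ ‖r‖ ^ 2 * ‖S‖ ^ 2 * ‖d‖ ^ 2 := by
  by_cases hS0 : S = 0
  · simp [hS0]
  by_cases hd0 : d = 0
  · simp [hd0]
  have pS : 0 < ‖S‖ ^ 2 := by positivity
  have pd : 0 < ‖d‖ ^ 2 := by positivity
  have hd : inner ℝ d S = (0 : ℝ) := by rw [real_inner_comm]; exact hS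
  have key : 0 ≤ ‖(‖S‖ ^ 2 * ‖d‖ ^ 2) • r - (‖d‖ ^ 2 * inner ℝ r S) • S
      - (‖S‖ ^ 2 * inner ℝ r d) • d‖ ^ 2 := by positivity
  rw [← real_inner_self_eq_norm_sq] at key
  simp only [inner_sub_left, inner_sub_right, real_inner_smul_left, real_inner_smul_right,
    hS, hd, real_inner_comm r S, real_inner_comm r d, real_inner_self_eq_norm_sq,
    norm_smul, mul_pow, Real.norm_eq_abs, sq_abs] at key
  have h2 : 0 ≤ (‖S‖ ^ 2 * ‖d‖ ^ 2) * (‖r‖ ^ 2 * ‖S‖ ^ 2 * ‖d‖ ^ 2 -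
     (‖d‖ ^ 2 * (inner ℝ r S) ^ 2 + ‖S‖ ^ 2 * (inner ℝ r d) ^ 2)) := by
    rw [real_inner_comm S r, real_inner_comm d r]
    rw [real_inner_comm S r, real_inner_comm d r] at key
    linarith
  have := nonneg_of_mul_nonneg_right h2 (by positivity)
  linarith

theorem two_term_sq {x y s d : ℝ} (hs : 0 < s) (hd : 0 < d)
    (h : x ^ 2 * d + y ^ 2 * s ≤ s * d) : (x + y) ^ 2 ≤ s + d := by
  have h1 : s * d * (x + y) ^ 2 ≤ s * d * (s + d) := by
    nlinarith [sq_nonneg (x * d - y * s), mul_le_mul_of_nonneg_left h (by positivity : 0 ≤ s + d)]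
  exact le_of_mul_le_mul_left h1 (by positivity)

theorem jlemma {q : ℝ} {r : E} (hq : 0 ≤ q) (h : q ^ 2 + ‖r‖ ^ 2 = 1) (S d b : E)
    (hS : inner ℝ S d = (0 : ℝ)) (hb : ‖b‖ ≤ 1) :
    (inner ℝ r S + lf q r d b) ^ 2 ≤ ‖S‖ ^ 2 + ‖d‖ ^ 2 := by
  have hy := lf_sq_le hq h d b hb
  have hx := inner_sq_le r S
  have hxd := inner_sq_le r d
  have hB := bessel_two r S d hS
  by_cases hS0 : S = 0
  · subst hS0
    simp only [inner_zero_right, norm_zero]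
    nlinarith
  by_cases hd0 : d = 0
  · subst hd0
    rw [lf_zero_left]
    simp only [norm_zero]
    nlinarith [sq_nonneg q, sq_nonneg ‖S‖]
  apply two_term_sq (by positivity) (by positivity)
  have pS : 0 < ‖S‖ ^ 2 := by positivity
  have := mul_le_mul_of_nonneg_right hy pS.le
  have e : q ^ 2 = 1 - ‖r‖ ^ 2 := by linarith
  rw [e] at this
  linarith

/-- Positivity on products of cone elements. -/
theorem cf_cone {q : ℝ} {r : E} (hq : 0 ≤ q) (h : q ^ 2 + ‖r‖ ^ 2 = 1) {α β : ℝ} {a b : E}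
    (ha : ‖a‖ ≤ α) (hb : ‖b‖ ≤ β) : 0 ≤ cf q r α a β b := by
  have hr : ‖r‖ ≤ 1 := by nlinarith [norm_nonneg r]
  have hα := (norm_nonneg a).trans ha
  have hβ := (norm_nonneg b).trans hb
  have h0 : 0 ≤ β + inner ℝ r b := by
    have := neg_le_of_abs_le (abs_real_inner_le_norm r b)
    nlinarith [norm_nonneg b]
  have h1 : ‖β • r + lop q r b‖ ≤ β + inner ℝ r b := by
    rw [← pow_le_pow_iff_left₀ (norm_nonneg _) h0 (two_ne_zero)]
    rw [norm_add_sq_real, norm_smul, mul_pow, real_inner_smul_left, inner_r_lop hq h, norm_lop hq h,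
      Real.norm_eq_abs, sq_abs]
    have : ‖b‖ ^ 2 ≤ β ^ 2 := by gcongr
    have e : ‖r‖ ^ 2 = 1 - q ^ 2 := by linarith
    rw [e]
    nlinarith [mul_le_mul_of_nonneg_left this (sq_nonneg q)]
  have h2 := neg_le_of_abs_le (abs_real_inner_le_norm a (β • r + lop q r b))
  rw [inner_add_right, real_inner_smul_right, inner_lop, real_inner_comm r a] at h2
  unfold cf
  have h3 : ‖a‖ * ‖β • r + lop q r b‖ ≤ α * (β + inner ℝ r b) := by gcongr
  linarith

theorem cf_add_left (q : ℝ) (r : E) (α α' : ℝ) (a a' : E) (β : ℝ) (b : E) :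
    cf q r (α + α') (a + a') β b = cf q r α a β b + cf q r α' a' β b := by
  unfold cf; rw [lf_add_left, inner_add_right]; ring

/-- Main inequality: all observables are traceless unit observables. -/
theorem main_unit {q : ℝ} {r : E} (hq : 0 ≤ q) (h : q ^ 2 + ‖r‖ ^ 2 = 1) (a1 a2 a3 b1 b2 b3 : E)
    (ha1 : ‖a1‖ = 1) (ha2 : ‖a2‖ = 1) (ha3 : ‖a3‖ = 1)
    (hb1 : ‖b1‖ = 1) (hb2 : ‖b2‖ = 1) (hb3 : ‖b3‖ = 1) :
    lf q r (a1 + a2) (b1 + b2) + lf q r a3 (b1 - b2) + lf q r (a1 - a2) b3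
      - inner ℝ r (a1 + a2) + inner ℝ r (b1 + b2) ≤ 5 := by
  have hs : inner ℝ (a1 + a2) (a1 - a2) = (0 : ℝ) := by
    simp only [inner_add_left, inner_sub_right, real_inner_self_eq_norm_sq, ha1, ha2,
      real_inner_comm a1 a2]; ring
  have ht : inner ℝ (b1 + b2) (b1 - b2) = (0 : ℝ) := by
    simp only [inner_add_left, inner_sub_right, real_inner_self_eq_norm_sq, hb1, hb2,
      real_inner_comm b1 b2]; ring
  have ns : ‖a1 - a2‖ ^ 2 = 4 - ‖a1 + a2‖ ^ 2 := by
    rw [norm_sub_sq_real, norm_add_sq_real, ha1, ha2]; ring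
  have nt : ‖b1 - b2‖ ^ 2 = 4 - ‖b1 + b2‖ ^ 2 := by
    rw [norm_sub_sq_real, norm_add_sq_real, hb1, hb2]; ring
  set s := a1 + a2
  set d := a1 - a2
  set T := b1 + b2
  set D := b1 - b2
  obtain ⟨c, hc⟩ : ∃ c, ‖s‖ = 2 * c := ⟨‖s‖ / 2, by ring⟩
  obtain ⟨c', hc'⟩ : ∃ c, ‖T‖ = 2 * c := ⟨‖T‖ / 2, by ring⟩
  have pc : 0 ≤ c := by linarith [norm_nonneg s]
  have pc' : 0 ≤ c' := by linarith [norm_nonneg T]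
  have p1 := cf_cone hq h (α := 2 * c) (β := 2 * c') (a := s) (b := -T) hc.le
    (by rw [norm_neg]; exact hc'.le)
  have p2 := cf_cone hq h (α := 2 * c) (β := 2 * c') (a := -s) (b := T)
    (by rw [norm_neg]; exact hc.le) hc'.le
  unfold cf at p1 p2
  simp only [lf_neg_left, lf_neg_right, inner_neg_right] at p1 p2
  have bound : ∀ l : ℝ, 0 ≤ l → l ≤ 1 →
      lf q r s T ≤ 4 * c * c' + l * (2 * c' * inner ℝ r s - 2 * c * inner ℝ r T) := by
    intro l l0 l1
    have g1 := mul_nonneg l0 p1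
    have g2 := mul_nonneg (sub_nonneg.2 l1) p1
    have g3 := mul_nonneg (sub_nonneg.2 l1) p2
    linarith
  have j1 : ∀ k : ℝ, (k * inner ℝ r s + lf q r d b3) ^ 2 ≤ k ^ 2 * (4 * c ^ 2) + (4 - 4 * c ^ 2) := by
    intro k
    have := jlemma hq h (k • s) d b3 (by rw [real_inner_smul_left, hs, mul_zero]) hb3.le
    rw [real_inner_smul_right, norm_smul, ns, hc, mul_pow, Real.norm_eq_abs, sq_abs] at this
    linarith
  have j2 : ∀ k : ℝ, (k * inner ℝ r T + lf q r a3 D) ^ 2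
      ≤ k ^ 2 * (4 * c' ^ 2) + (4 - 4 * c' ^ 2) := by
    intro k
    have := jlemma hq h (k • T) D a3 (by rw [real_inner_smul_left, ht, mul_zero]) ha3.le
    rw [real_inner_smul_right, norm_smul, nt, hc', mul_pow, Real.norm_eq_abs, sq_abs,
      lf_comm] at this
    linarith
  generalize lf q r s T = e at *
  generalize lf q r d b3 = u at *
  generalize lf q r a3 D = v at *
  generalize inner ℝ r s = x at *
  generalize inner ℝ r T = y at *
  rcases le_total (c + c') (4 * (c * c')) with hcase | hcase
  · by_cases hk : c * c' = 0
    · have h1 := bound 0 le_rfl zero_le_one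
      have h2 := j1 (-1)
      have h3 := j2 1
      have g1 := sq_nonneg (-1 * x + u - 2)
      have g2 := sq_nonneg (1 * y + v - 2)
      linarith
    have hkp : 0 < c * c' := lt_of_le_of_ne (by positivity) (Ne.symm hk)
    have hc0 : 0 < c := lt_of_le_of_ne pc (by rintro rfl; simp at hk)
    have hc0' : 0 < c' := lt_of_le_of_ne pc' (by rintro rfl; simp at hk)
    obtain ⟨l, hl⟩ : ∃ l, l * (4 * (c * c')) = c + c' :=
      ⟨(c + c') / (4 * (c * c')), by field_simp⟩
    have l0 : 0 ≤ l := by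
      by_contra hneg; push Not at hneg; nlinarith [mul_neg_of_neg_of_pos hneg hkp]
    have l1 : l ≤ 1 := by
      by_contra hneg; push Not at hneg; nlinarith [mul_lt_mul_of_pos_right hneg hkp]
    have h1 := bound l l0 l1
    have h2 := j1 (2 * l * c' - 1)
    have h3 := j2 (1 - 2 * l * c)
    have e1 : (2 * l * c' - 1) ^ 2 * (4 * c ^ 2) = (c' - c) ^ 2 := by
      have : (2 * l * c' - 1) * (2 * c) = c' - c := by linarith
      rw [← this]; ring
    have e2 : (1 - 2 * l * c) ^ 2 * (4 * c' ^ 2) = (c' - c) ^ 2 := by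
      have : (1 - 2 * l * c) * (2 * c') = c' - c := by linarith
      rw [← this]; ring
    rw [e1] at h2
    rw [e2] at h3
    have g1 := sq_nonneg ((2 * l * c' - 1) * x + u - 1)
    have g2 := sq_nonneg ((1 - 2 * l * c) * y + v - 1)
    have g3 := sq_nonneg (c - c')
    linarith
  · have h1 := bound 1 zero_le_one le_rfl
    have h2 := j1 (2 * c' - 1)
    have h3 := j2 (1 - 2 * c)
    have hkp : 0 ≤ c * c' := by positivity
    have h4 := mul_le_mul_of_nonneg_left hcase hkp
    have g1 := sq_nonneg ((2 * c' - 1) * x + u - 2)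
    have g2 := sq_nonneg ((1 - 2 * c) * y + v - 2)
    have g3 := sq_nonneg (4 * (c * c') - 1)
    linarith

end RealPart
section Convex

set_option linter.unusedSectionVars false

variable {E : Type*} [NormedAddCommGroup E] [InnerProductSpace ℝ E]

/-- Marginal expectation. -/
noncomputable def mx (r : E) (X : ℝ × E) : ℝ := X.1 + inner ℝ r X.2

/-- Correlation of two local observables. -/
noncomputable def cp (q : ℝ) (r : E) (X Y : ℝ × E) : ℝ := cf q r X.1 X.2 Y.1 Y.2

/-- Observables between `-1` and `1`. -/
def IsObs (X : ℝ × E) : Prop := |X.1| + ‖X.2‖ ≤ 1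

/-- Trivial observables. -/
def IsTriv (X : ℝ × E) : Prop := X = (1, 0) ∨ X = (-1, 0)

/-- Traceless unit observables. -/
def IsUn (X : ℝ × E) : Prop := X.1 = 0 ∧ ‖X.2‖ = 1

/-- The Bell functional. -/
noncomputable def Fv (q : ℝ) (r : E) (A1 A2 A3 B1 B2 B3 : ℝ × E) : ℝ :=
  cp q r A1 B1 + cp q r A1 B2 + cp q r A2 B1 + cp q r A2 B2 + cp q r A3 B1 - cp q r A3 B2
    + cp q r A1 B3 - cp q r A2 B3 - mx r A1 - mx r A2 + mx r B1 + mx r B2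

theorem IsTriv.isObs {X : ℝ × E} (h : IsTriv X) : IsObs X := by
  rcases h with rfl | rfl <;> simp [IsObs]

theorem IsUn.isObs {X : ℝ × E} (h : IsUn X) : IsObs X := by
  simp [IsObs, h.1, h.2]

theorem IsObs.neg {X : ℝ × E} (h : IsObs X) : IsObs (-X) := by
  simpa [IsObs] using h

theorem IsTriv.neg {X : ℝ × E} (h : IsTriv X) : IsTriv (-X) := by
  rcases h with rfl | rfl <;> simp [IsTriv]

theorem mx_neg (r : E) (X : ℝ × E) : mx r (-X) = - mx r X := by
  simp [mx]; ring

theorem cp_neg_neg (q : ℝ) (r : E) (X Y : ℝ × E) : cp q r (-X) (-Y) = cp q r Y X := by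
  simp [cp, cf, lf_neg_left, lf_neg_right]; rw [lf_comm]; ring

theorem Fv_swap (q : ℝ) (r : E) (A1 A2 A3 B1 B2 B3 : ℝ × E) :
    Fv q r A1 A2 A3 B1 B2 B3 = Fv q r (-B1) (-B2) (-B3) (-A1) (-A2) (-A3) := by
  unfold Fv; simp only [cp_neg_neg, mx_neg]; ring

theorem affine_red (f : ℝ × E → ℝ) (k : ℝ)
    (hf : ∀ X Y t, f (t • X + (1 - t) • Y) = t * f X + (1 - t) * f Y)
    (h1 : ∀ X, IsTriv X → f X ≤ k) (h2 : ∀ X, IsUn X → f X ≤ k) (X : ℝ × E) (hX : IsObs X) :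
    f X ≤ k := by
  have hc : ∀ γ : ℝ, |γ| ≤ 1 → f (γ, 0) ≤ k := by
    intro γ hγ
    rw [abs_le] at hγ
    have e : ((γ, 0) : ℝ × E) = ((1 + γ) / 2) • (1, 0) + (1 - (1 + γ) / 2) • (-1, 0) := by
      ext
      · simp; ring
      · simp
    rw [e, hf]
    have a1 := h1 (1, 0) (Or.inl rfl)
    have a2 := h1 (-1, 0) (Or.inr rfl)
    nlinarith
  obtain ⟨β, b⟩ := X
  simp only [IsObs] at hX
  by_cases hb : b = 0
  · subst hb
    apply hc; simpa using hX
  have hbp : 0 < ‖b‖ := norm_pos_iff.2 hb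
  by_cases h1' : ‖b‖ = 1
  · apply h2
    refine ⟨?_, h1'⟩
    have : |β| ≤ 0 := by linarith
    simpa using this
  have hlt : ‖b‖ < 1 := lt_of_le_of_ne (by linarith [abs_nonneg β]) h1'
  have hne : 1 - ‖b‖ ≠ 0 := by linarith
  have e : ((β, b) : ℝ × E) = ‖b‖ • (0, ‖b‖⁻¹ • b) + (1 - ‖b‖) • (β / (1 - ‖b‖), 0) := by
    ext
    · simp; field_simp
    · simp [smul_smul, hbp.ne']
  rw [e, hf]
  have a1 := h2 (0, ‖b‖⁻¹ • b) ⟨rfl, by simp [norm_smul, hbp.ne']⟩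
  have a2 := hc (β / (1 - ‖b‖)) (by
    rw [abs_div, abs_of_pos (by linarith : 0 < 1 - ‖b‖), div_le_one (by linarith)]
    linarith)
  nlinarith

theorem cp_pos {q : ℝ} {r : E} (hq : 0 ≤ q) (h : q ^ 2 + ‖r‖ ^ 2 = 1) {X Y : ℝ × E}
    (hX : IsObs X) (hY : IsObs Y) :
    0 ≤ 1 + mx r X + mx r Y + cp q r X Y ∧ 0 ≤ 1 + mx r X - mx r Y - cp q r X Y ∧
    0 ≤ 1 - mx r X + mx r Y - cp q r X Y ∧ 0 ≤ 1 - mx r X - mx r Y + cp q r X Y := by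
  obtain ⟨α, a⟩ := X
  obtain ⟨β, b⟩ := Y
  simp only [IsObs] at hX hY
  have x1 := le_abs_self α
  have x2 := neg_abs_le α
  have y1 := le_abs_self β
  have y2 := neg_abs_le β
  have p1 := cf_cone hq h (α := 1 + α) (a := a) (β := 1 + β) (b := b) (by linarith) (by linarith)
  have p2 := cf_cone hq h (α := 1 + α) (a := a) (β := 1 - β) (b := -b) (by linarith)
    (by rw [norm_neg]; linarith)
  have p3 := cf_cone hq h (α := 1 - α) (a := -a) (β := 1 + β) (b := b)
    (by rw [norm_neg]; linarith) (by linarith)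
  have p4 := cf_cone hq h (α := 1 - α) (a := -a) (β := 1 - β) (b := -b)
    (by rw [norm_neg]; linarith) (by rw [norm_neg]; linarith)
  simp only [cp, mx, cf, lf_neg_left, lf_neg_right, inner_neg_right] at *
  refine ⟨?_, ?_, ?_, ?_⟩ <;> linarith

theorem lf_two_le {q : ℝ} {r : E} (hq : 0 ≤ q) (h : q ^ 2 + ‖r‖ ^ 2 = 1) (a b : E) :
    2 * lf q r a b ≤ ‖a‖ ^ 2 + ‖b‖ ^ 2 - (inner ℝ r (a - b)) ^ 2 := by
  have hq1 : 0 < 1 + q := by positivity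
  have haa := inner_sq_le r a
  have hbb := inner_sq_le r b
  have hp := inner_sq_le r (a + b)
  have hm := inner_sq_le r (a - b)
  rw [norm_add_sq_real, inner_add_right] at hp
  rw [norm_sub_sq_real, inner_sub_right] at hm
  rw [inner_sub_right]
  unfold lf
  set x : ℝ := inner ℝ r a
  set y : ℝ := inner ℝ r b
  set z : ℝ := inner ℝ a b
  have e : ‖r‖ ^ 2 = (1 - q) * (1 + q) := by linarith
  rw [e] at haa hbb hp hm
  have nn : 0 ≤ ‖a‖ ^ 2 - 2 * z + ‖b‖ ^ 2 := by rw [← norm_sub_sq_real]; positivity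
  have hq2 : q ≤ 1 := by nlinarith [sq_nonneg ‖r‖]
  have key : (1 + q) * (2 * (q * z + x * y / (1 + q)))
      ≤ (1 + q) * (‖a‖ ^ 2 + ‖b‖ ^ 2 - (x - y) ^ 2) := by
    have : (1 + q) * (2 * (q * z + x * y / (1 + q))) = 2 * q * (1 + q) * z + 2 * (x * y) := by
      field_simp
    rw [this]
    rcases eq_or_lt_of_le hq2 with h1 | h1
    · subst h1
      have hx : x ^ 2 ≤ 0 := by linarith
      have hy : y ^ 2 ≤ 0 := by linarith
      have hx0 : x = 0 := by nlinarith
      have hy0 : y = 0 := by nlinarith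
      rw [hx0, hy0]
      linarith
    · have h2 : 0 < 1 - q := by linarith
      refine le_of_mul_le_mul_left ?_ h2
      have g1 := mul_le_mul_of_nonneg_left hm hq
      have g2 := mul_le_mul_of_nonneg_left haa h2.le
      have g3 := mul_le_mul_of_nonneg_left hbb h2.le
      have g4 := sq_nonneg (q * (x - y))
      linarith
  exact le_of_mul_le_mul_left key hq1

theorem cp_le {q : ℝ} {r : E} (hq : 0 ≤ q) (h : q ^ 2 + ‖r‖ ^ 2 = 1) (X Y : ℝ × E) :
    2 * cp q r X Y ≤ (X.1 ^ 2 + 2 * X.1 * inner ℝ r X.2 + ‖X.2‖ ^ 2)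
      + (Y.1 ^ 2 + 2 * Y.1 * inner ℝ r Y.2 + ‖Y.2‖ ^ 2) := by
  have := lf_two_le hq h X.2 Y.2
  rw [inner_sub_right] at this
  unfold cp cf
  nlinarith [sq_nonneg (X.1 - Y.1 + (inner ℝ r X.2 - inner ℝ r Y.2))]

theorem nrm_le {q : ℝ} {r : E} (h : q ^ 2 + ‖r‖ ^ 2 = 1) {X : ℝ × E} (hX : IsObs X) :
    X.1 ^ 2 + 2 * X.1 * inner ℝ r X.2 + ‖X.2‖ ^ 2 ≤ 1 := by
  unfold IsObs at hX
  have hr : ‖r‖ ≤ 1 := by nlinarith [norm_nonneg r]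
  have h1 := abs_real_inner_le_norm r X.2
  have h2 : |(inner ℝ r X.2 : ℝ)| ≤ ‖X.2‖ := by nlinarith [norm_nonneg X.2]
  have h3 : X.1 * inner ℝ r X.2 ≤ |X.1| * ‖X.2‖ := by
    calc _ ≤ |X.1 * inner ℝ r X.2| := le_abs_self _
      _ = |X.1| * |(inner ℝ r X.2 : ℝ)| := abs_mul _ _
      _ ≤ _ := by gcongr
  rw [← sq_abs X.1]
  nlinarith [abs_nonneg X.1, norm_nonneg X.2]

theorem chsh {q : ℝ} {r : E} (hq : 0 ≤ q) (h : q ^ 2 + ‖r‖ ^ 2 = 1) {A A' B B' : ℝ × E}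
    (hA : IsObs A) (hA' : IsObs A') (hB : IsObs B) (hB' : IsObs B') :
    cp q r A B + cp q r A B' + cp q r A' B - cp q r A' B' ≤ 3 := by
  have h1 := cp_le hq h A (B + B')
  have h2 := cp_le hq h A' (B - B')
  have n1 := nrm_le h hA
  have n2 := nrm_le h hA'
  have n3 := nrm_le h hB
  have n4 := nrm_le h hB'
  simp only [cp, cf, Prod.fst_add, Prod.snd_add, Prod.fst_sub, Prod.snd_sub, inner_add_right,
    inner_sub_right, lf_add_right, lf_sub_right, norm_add_sq_real, norm_sub_sq_real] at *
  linarith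

theorem cp_triv1 (q : ℝ) (r : E) (Y : ℝ × E) : cp q r (1, 0) Y = mx r Y := by
  simp [cp, cf, mx, lf_zero_left]
theorem cp_triv2 (q : ℝ) (r : E) (Y : ℝ × E) : cp q r (-1, 0) Y = - mx r Y := by
  simp [cp, cf, mx, lf_zero_left]; ring
theorem mx_triv1 (r : E) : mx r (1, 0) = 1 := by simp [mx]
theorem mx_triv2 (r : E) : mx r (-1, 0) = -1 := by simp [mx]

theorem Fv_triv {q : ℝ} {r : E} (hq : 0 ≤ q) (h : q ^ 2 + ‖r‖ ^ 2 = 1) {A1 A2 A3 B1 B2 B3 : ℝ × E}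
    (hA1 : IsObs A1) (hA2 : IsObs A2) (hA3 : IsObs A3)
    (hB1 : IsObs B1) (hB2 : IsObs B2) (hB3 : IsObs B3)
    (ht : IsTriv A1 ∨ IsTriv A2 ∨ IsTriv A3) : Fv q r A1 A2 A3 B1 B2 B3 ≤ 5 := by
  have p11 := cp_pos hq h hA1 hB1
  have p12 := cp_pos hq h hA1 hB2
  have p13 := cp_pos hq h hA1 hB3
  have p21 := cp_pos hq h hA2 hB1
  have p22 := cp_pos hq h hA2 hB2
  have p23 := cp_pos hq h hA2 hB3
  have p31 := cp_pos hq h hA3 hB1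
  have p32 := cp_pos hq h hA3 hB2
  have c1 := chsh hq h hA1 hA3 hB1 hB2
  have c2 := chsh hq h hA2 hA3 hB1 hB2
  have c3 := chsh hq h hA1 hA2 hB1 hB3
  have c4 := chsh hq h hA1 hA2 hB2 hB3
  unfold Fv
  rcases ht with (rfl | rfl) | (rfl | rfl) | (rfl | rfl) <;>
  simp only [cp_triv1, cp_triv2, mx_triv1, mx_triv2] at * <;>
  linarith

theorem Fv_le {q : ℝ} {r : E} (hq : 0 ≤ q) (h : q ^ 2 + ‖r‖ ^ 2 = 1) {A1 A2 A3 B1 B2 B3 : ℝ × E}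
    (hA1 : IsObs A1) (hA2 : IsObs A2) (hA3 : IsObs A3)
    (hB1 : IsObs B1) (hB2 : IsObs B2) (hB3 : IsObs B3) : Fv q r A1 A2 A3 B1 B2 B3 ≤ 5 := by
  have tA := fun {A1 A2 A3 B1 B2 B3 : ℝ × E} => @Fv_triv E _ _ q r hq h A1 A2 A3 B1 B2 B3
  have aff : ∀ (q : ℝ) (r : E) (X Y Z : ℝ × E) (t : ℝ), cp q r (t • X + (1 - t) • Y) Z
      = t * cp q r X Z + (1 - t) * cp q r Y Z := by
    intro q r X Y Z t
    simp only [cp, cf, Prod.fst_add, Prod.snd_add, Prod.smul_fst, Prod.smul_snd, inner_add_right,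
      lf_add_left, lf_smul_left, real_inner_smul_right, smul_eq_mul]
    ring
  have aff' : ∀ (q : ℝ) (r : E) (X Y Z : ℝ × E) (t : ℝ), cp q r Z (t • X + (1 - t) • Y)
      = t * cp q r Z X + (1 - t) * cp q r Z Y := by
    intro q r X Y Z t
    simp only [cp, cf, Prod.fst_add, Prod.snd_add, Prod.smul_fst, Prod.smul_snd, inner_add_right,
      lf_add_right, lf_smul_right, real_inner_smul_right, smul_eq_mul]
    ring
  have affm : ∀ (r : E) (X Y : ℝ × E) (t : ℝ), mx r (t • X + (1 - t) • Y)
      = t * mx r X + (1 - t) * mx r Y := by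
    intro r X Y t
    simp only [mx, Prod.fst_add, Prod.snd_add, Prod.smul_fst, Prod.smul_snd, inner_add_right,
      real_inner_smul_right, smul_eq_mul]
    ring
  have tB : ∀ {A1 A2 A3 B1 B2 B3 : ℝ × E}, IsObs A1 → IsObs A2 → IsObs A3 → IsObs B1 → IsObs B2 →
      IsObs B3 → (IsTriv B1 ∨ IsTriv B2 ∨ IsTriv B3) → Fv q r A1 A2 A3 B1 B2 B3 ≤ 5 := by
    intro A1 A2 A3 B1 B2 B3 h1 h2 h3 h4 h5 h6 h7
    rw [Fv_swap]
    refine tA h4.neg h5.neg h6.neg h1.neg h2.neg h3.neg ?_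
    rcases h7 with h7 | h7 | h7
    · exact Or.inl h7.neg
    · exact Or.inr (Or.inl h7.neg)
    · exact Or.inr (Or.inr h7.neg)
  refine affine_red (fun X => Fv q r X A2 A3 B1 B2 B3) 5 ?_
    (fun A1 u => tA u.isObs hA2 hA3 hB1 hB2 hB3 (Or.inl u)) (fun A1 u1 => ?_) A1 hA1
  · intro X Y t; simp only [Fv, aff, affm]; ring
  refine affine_red (fun X => Fv q r A1 X A3 B1 B2 B3) 5 ?_
    (fun A2 u => tA u1.isObs u.isObs hA3 hB1 hB2 hB3 (Or.inr (Or.inl u))) (fun A2 u2 => ?_) A2 hA2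
  · intro X Y t; simp only [Fv, aff, affm]; ring
  refine affine_red (fun X => Fv q r A1 A2 X B1 B2 B3) 5 ?_
    (fun A3 u => tA u1.isObs u2.isObs u.isObs hB1 hB2 hB3 (Or.inr (Or.inr u)))
    (fun A3 u3 => ?_) A3 hA3
  · intro X Y t; simp only [Fv, aff]; ring
  refine affine_red (fun X => Fv q r A1 A2 A3 X B2 B3) 5 ?_
    (fun B1 u => tB u1.isObs u2.isObs u3.isObs u.isObs hB2 hB3 (Or.inl u)) (fun B1 v1 => ?_) B1 hB1
  · intro X Y t; simp only [Fv, aff', affm]; ring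
  refine affine_red (fun X => Fv q r A1 A2 A3 B1 X B3) 5 ?_
    (fun B2 u => tB u1.isObs u2.isObs u3.isObs v1.isObs u.isObs hB3 (Or.inr (Or.inl u)))
    (fun B2 v2 => ?_) B2 hB2
  · intro X Y t; simp only [Fv, aff', affm]; ring
  refine affine_red (fun X => Fv q r A1 A2 A3 B1 B2 X) 5 ?_
    (fun B3 u => tB u1.isObs u2.isObs u3.isObs v1.isObs v2.isObs u.isObs (Or.inr (Or.inr u)))
    (fun B3 v3 => ?_) B3 hB3
  · intro X Y t; simp only [Fv, aff']; ring
  have := main_unit hq h A1.2 A2.2 A3.2 B1.2 B2.2 B3.2 u1.2 u2.2 u3.2 v1.2 v2.2 v3.2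
  simp only [lf_add_left, lf_add_right, lf_sub_left, lf_sub_right, inner_add_right] at this
  simp only [Fv, cp, cf, mx, u1.1, u2.1, u3.1, v1.1, v2.1, v3.1]
  linarith

end Convex
section Boost

variable {E : Type*} [NormedAddCommGroup E] [InnerProductSpace ℝ E]

/-- Any assemblage element comes from a qubit observable on the other side. -/
theorem boost {q : ℝ} {r : E} (hq : 0 ≤ q) (h : q ^ 2 + ‖r‖ ^ 2 = 1) (t0 : ℝ) (t : E)
    (h1 : ‖r + t‖ ≤ 1 + t0) (h2 : ‖r - t‖ ≤ 1 - t0) :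
    ∃ B : ℝ × E, IsObs B ∧ mx r B = t0 ∧ ∀ α a, cf q r α a B.1 B.2 = α * t0 + inner ℝ a t := by
  have n1 : ‖r + t‖ ^ 2 ≤ (1 + t0) ^ 2 := by gcongr
  have n2 : ‖r - t‖ ^ 2 ≤ (1 - t0) ^ 2 := by gcongr
  have i1 := (real_inner_le_norm r (r + t)).trans (mul_le_mul_of_nonneg_left h1 (norm_nonneg r))
  have i2 := (real_inner_le_norm r (r - t)).trans (mul_le_mul_of_nonneg_left h2 (norm_nonneg r))
  rw [inner_add_right, real_inner_self_eq_norm_sq] at i1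
  rw [inner_sub_right, real_inner_self_eq_norm_sq] at i2
  rw [norm_add_sq_real] at n1
  rw [norm_sub_sq_real] at n2
  have hr : ‖r‖ ≤ 1 := by nlinarith [norm_nonneg r]
  have pt1 : 0 ≤ 1 + t0 := (norm_nonneg _).trans h1
  have pt2 : 0 ≤ 1 - t0 := (norm_nonneg _).trans h2
  rcases eq_or_lt_of_le hq with h0 | h0
  · subst h0
    have hr1 : ‖r‖ ^ 2 = 1 := by linarith
    have hr2 : ‖r‖ = 1 := by nlinarith [norm_nonneg r]
    rw [hr2] at i1 i2
    have e0 : inner ℝ r t = t0 := by linarith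
    have hz : ‖t - t0 • r‖ ^ 2 ≤ 0 := by
      rw [norm_sub_sq_real, real_inner_smul_right, norm_smul, real_inner_comm, e0, mul_pow,
        Real.norm_eq_abs, sq_abs, hr1]
      rw [e0, hr1] at n1
      linarith
    have hz' : ‖t - t0 • r‖ = 0 := by nlinarith [norm_nonneg (t - t0 • r)]
    have ht : t = t0 • r := by rwa [norm_eq_zero, sub_eq_zero] at hz'
    refine ⟨(t0, 0), ?_, ?_, ?_⟩
    · simp only [IsObs, norm_zero, add_zero]
      rw [abs_le]; constructor <;> linarith
    · simp [mx]
    · intro α a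
      rw [ht]
      simp only [cf, lf_zero_right, inner_zero_right, real_inner_smul_right, real_inner_comm]
      ring
  · have hq2 : 0 < q ^ 2 := by positivity
    have hq1 : (1 + q) ≠ 0 := by positivity
    have er : ‖r‖ ^ 2 = 1 - q ^ 2 := by linarith
    set x : ℝ := inner ℝ r t with hx
    obtain ⟨b0, hb0⟩ : ∃ b0, b0 * q ^ 2 = t0 - x := ⟨(t0 - x) / q ^ 2, by field_simp⟩
    obtain ⟨b, hb⟩ : ∃ b, b = q⁻¹ • (t - (b0 + (t0 - b0) / (1 + q)) • r) := ⟨_, rfl⟩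
    have hrb : inner ℝ r b = t0 - b0 := by
      rw [hb, real_inner_smul_right, inner_sub_right, real_inner_smul_right,
        real_inner_self_eq_norm_sq, er, ← hx]
      have : x = t0 - b0 * q ^ 2 := by linarith
      rw [this]
      field_simp; ring
    have hL : t = b0 • r + lop q r b := by
      have : q • b = t - (b0 + (t0 - b0) / (1 + q)) • r := by
        rw [hb, smul_smul, mul_inv_cancel₀ h0.ne', one_smul]
      unfold lop
      rw [this, hrb, add_smul]; abel
    have nt : ‖t‖ ^ 2 = b0 ^ 2 * (1 - q ^ 2) + 2 * b0 * (t0 - b0) + q ^ 2 * ‖b‖ ^ 2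
        + (t0 - b0) ^ 2 := by
      rw [hL, norm_add_sq_real, norm_smul, mul_pow, real_inner_smul_left, inner_r_lop hq h,
        norm_lop hq h, hrb, Real.norm_eq_abs, sq_abs, er]; ring
    have k1 : 0 ≤ 1 + b0 := by
      have : 0 ≤ (1 + b0) * q ^ 2 := by nlinarith [norm_nonneg r]
      exact nonneg_of_mul_nonneg_left this hq2
    have k2 : 0 ≤ 1 - b0 := by
      have : 0 ≤ (1 - b0) * q ^ 2 := by nlinarith [norm_nonneg r]
      exact nonneg_of_mul_nonneg_left this hq2
    rw [nt, er] at n1 n2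
    have ex : x = t0 - b0 * q ^ 2 := by linarith
    rw [ex] at n1 n2
    have m1 : ‖b‖ ≤ 1 + b0 := by
      rw [← pow_le_pow_iff_left₀ (norm_nonneg _) k1 two_ne_zero]
      refine le_of_mul_le_mul_left ?_ hq2
      linarith
    have m2 : ‖b‖ ≤ 1 - b0 := by
      rw [← pow_le_pow_iff_left₀ (norm_nonneg _) k2 two_ne_zero]
      refine le_of_mul_le_mul_left ?_ hq2
      linarith
    refine ⟨(b0, b), ?_, ?_, ?_⟩
    · simp only [IsObs]
      rcases abs_cases b0 with ⟨h, _⟩ | ⟨h, _⟩ <;> rw [h] <;> linarith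
    · simp only [mx, hrb]; ring
    · intro α a
      rw [hL, inner_add_right, inner_lop, real_inner_smul_right]
      simp only [cf, hrb]
      rw [real_inner_comm]; ring

end Boost
section Quantum

variable {ιA ιB : Type*} [Fintype ιA] [Fintype ιB] [DecidableEq ιA] [DecidableEq ιB]

set_option linter.unusedSectionVars false

theorem jointP_add_left (ρ : Matrix (ιA × ιB) (ιA × ιB) ℂ) (G G' : Matrix ιA ιA ℂ)
    (N : Matrix ιB ιB ℂ) : jointP ρ (G + G') N = jointP ρ G N + jointP ρ G' N := by
  simp [jointP, add_kronecker, Matrix.mul_add]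

theorem jointP_add_right (ρ : Matrix (ιA × ιB) (ιA × ιB) ℂ) (G : Matrix ιA ιA ℂ)
    (N N' : Matrix ιB ιB ℂ) : jointP ρ G (N + N') = jointP ρ G N + jointP ρ G N' := by
  simp [jointP, kronecker_add, Matrix.mul_add]

theorem jointP_smul_left (ρ : Matrix (ιA × ιB) (ιA × ιB) ℂ) (c : ℝ) (G : Matrix ιA ιA ℂ)
    (N : Matrix ιB ιB ℂ) : jointP ρ ((c : ℂ) • G) N = c * jointP ρ G N := by
  simp [jointP, smul_kronecker]

theorem jointP_sub_left (ρ : Matrix (ιA × ιB) (ιA × ιB) ℂ) (G G' : Matrix ιA ιA ℂ)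
    (N : Matrix ιB ιB ℂ) : jointP ρ (G - G') N = jointP ρ G N - jointP ρ G' N := by
  have := jointP_add_left ρ (G - G') G' N
  rw [sub_add_cancel] at this
  linarith

theorem jointP_sub_right (ρ : Matrix (ιA × ιB) (ιA × ιB) ℂ) (G : Matrix ιA ιA ℂ)
    (N N' : Matrix ιB ιB ℂ) : jointP ρ G (N - N') = jointP ρ G N - jointP ρ G N' := by
  have := jointP_add_right ρ G (N - N') N'
  rw [sub_add_cancel] at this
  linarith

theorem psd_of_proj {n : Type*} [Fintype n] {P : Matrix n n ℂ} (h : P.IsHermitian ∧ P * P = P) :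
    P.PosSemidef := by
  have := posSemidef_conjTranspose_mul_self P
  rwa [h.1.eq, h.2] at this

theorem proj_compl {n : Type*} [Fintype n] [DecidableEq n] {P : Matrix n n ℂ}
    (h : P.IsHermitian ∧ P * P = P) : (1 - P).IsHermitian ∧ (1 - P) * (1 - P) = 1 - P := by
  refine ⟨isHermitian_one.sub h.1, ?_⟩
  rw [Matrix.sub_mul, Matrix.mul_sub, Matrix.mul_sub, h.2]
  simp

theorem jointP_nonneg {ρ : Matrix (ιA × ιB) (ιA × ιB) ℂ} (hρ : ρ.PosSemidef)
    {G : Matrix ιA ιA ℂ} {N : Matrix ιB ιB ℂ} (hG : G.IsHermitian ∧ G * G = G)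
    (hN : N.IsHermitian ∧ N * N = N) : 0 ≤ jointP ρ G N := by
  have hK : (G ⊗ₖ N)ᴴ = G ⊗ₖ N := by rw [conjTranspose_kronecker, hG.1.eq, hN.1.eq]
  have hK2 : (G ⊗ₖ N) * (G ⊗ₖ N) = G ⊗ₖ N := by rw [← mul_kronecker_mul, hG.2, hN.2]
  have h1 := (hρ.conjTranspose_mul_mul_same (G ⊗ₖ N)).trace_nonneg
  rw [hK, Matrix.mul_assoc, Matrix.trace_mul_comm, Matrix.mul_assoc, hK2] at h1
  exact (Complex.le_def.1 h1).1

/-- Final algebra: a two-qubit style model yields the bound. -/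
theorem value_of_model {E : Type*} [NormedAddCommGroup E] [InnerProductSpace ℝ E]
    {ρ : Matrix (ιA × ιB) (ιA × ιB) ℂ}
    {M : Fin 3 → Matrix ιA ιA ℂ} {N : Fin 3 → Matrix ιB ιB ℂ}
    {q : ℝ} {r : E} (hq : 0 ≤ q) (h : q ^ 2 + ‖r‖ ^ 2 = 1) (A B : Fin 3 → ℝ × E)
    (hA : ∀ x, IsObs (A x)) (hB : ∀ y, IsObs (B y))
    (h1 : ∀ x, jointP ρ (M x) 1 = (1 + mx r (A x)) / 2)
    (h2 : ∀ y, jointP ρ 1 (N y) = (1 + mx r (B y)) / 2)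
    (h3 : ∀ x y, jointP ρ (M x) (N y) =
      (1 + mx r (A x) + mx r (B y) + cp q r (A x) (B y)) / 4) :
    I3322Value ρ M N ≤ 1 / 4 := by
  have key := Fv_le hq h (hA 0) (hA 1) (hA 2) (hB 0) (hB 1) (hB 2)
  have e1 : ∀ x, margA ρ (M x) = (1 + mx r (A x)) / 2 := h1
  have e2 : ∀ x, margB ρ (N x) = (1 + mx r (B x)) / 2 := h2
  unfold Fv at key
  unfold I3322Value
  rw [e1, e1, e2]
  simp only [h3]
  linarith

/-- Pauli vector. -/
noncomputable def sg (v : EuclideanSpace ℝ (Fin 3)) : Matrix (Fin 2) (Fin 2) ℂ :=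
  !![(v 2 : ℂ), v 0 - v 1 * Complex.I; v 0 + v 1 * Complex.I, -(v 2 : ℂ)]

theorem sg_decomp (v : EuclideanSpace ℝ (Fin 3)) :
    sg v = ((v 0 : ℝ) : ℂ) • !![0, 1; 1, 0] + (((v 1 : ℝ) : ℂ) • !![0, -Complex.I; Complex.I, 0]
      + ((v 2 : ℝ) : ℂ) • !![1, 0; 0, -1]) := by
  ext i j
  fin_cases i <;> fin_cases j <;> simp [sg] <;> ring

/-- Conditional Bloch vector. -/
noncomputable def tv (ρ : Matrix (Fin 2 × ιB) (Fin 2 × ιB) ℂ) (N : Matrix ιB ιB ℂ) :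
    EuclideanSpace ℝ (Fin 3) :=
  !₂[jointP ρ !![0, 1; 1, 0] N, jointP ρ !![0, -Complex.I; Complex.I, 0] N,
    jointP ρ !![1, 0; 0, -1] N]

theorem jointP_sg (ρ : Matrix (Fin 2 × ιB) (Fin 2 × ιB) ℂ) (v : EuclideanSpace ℝ (Fin 3))
    (N : Matrix ιB ιB ℂ) : jointP ρ (sg v) N = inner ℝ v (tv ρ N) := by
  rw [sg_decomp, jointP_add_left, jointP_add_left, jointP_smul_left, jointP_smul_left,
    jointP_smul_left]
  simp [tv, PiLp.inner_apply, Fin.sum_univ_three]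
  ring

theorem tv_sub (ρ : Matrix (Fin 2 × ιB) (Fin 2 × ιB) ℂ) (N N' : Matrix ιB ιB ℂ) :
    tv ρ (N - N') = tv ρ N - tv ρ N' := by
  ext i
  fin_cases i <;> simp [tv, jointP_sub_right]

theorem norm_sq3 (v : EuclideanSpace ℝ (Fin 3)) : ‖v‖ ^ 2 = v 0 ^ 2 + v 1 ^ 2 + v 2 ^ 2 := by
  rw [EuclideanSpace.norm_sq_eq, Fin.sum_univ_three]
  simp

theorem sg_proj (n : EuclideanSpace ℝ (Fin 3)) (hn : ‖n‖ = 1) :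
    (((1 / 2 : ℝ) : ℂ) • (1 - sg n)).IsHermitian ∧
    (((1 / 2 : ℝ) : ℂ) • (1 - sg n)) * (((1 / 2 : ℝ) : ℂ) • (1 - sg n))
      = ((1 / 2 : ℝ) : ℂ) • (1 - sg n) := by
  have h := norm_sq3 n
  rw [hn] at h
  have hc : (n 0 : ℂ) ^ 2 + (n 1 : ℂ) ^ 2 + (n 2 : ℂ) ^ 2 = 1 := by
    exact_mod_cast h.symm.trans (one_pow 2)
  have hI := Complex.I_sq
  constructor
  · ext i j
    fin_cases i <;> fin_cases j <;> simp [sg, Complex.ext_iff]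
  · ext i j
    fin_cases i <;> fin_cases j <;> simp [sg, Matrix.mul_apply, Fin.sum_univ_two] <;> grind

theorem tv_norm_le {ρ : Matrix (Fin 2 × ιB) (Fin 2 × ιB) ℂ} (hρ : ρ.PosSemidef)
    {N : Matrix ιB ιB ℂ} (hN : N.IsHermitian ∧ N * N = N) : ‖tv ρ N‖ ≤ jointP ρ 1 N := by
  by_cases h0 : tv ρ N = 0
  · rw [h0, norm_zero]
    exact jointP_nonneg hρ ⟨isHermitian_one, by simp⟩ hN
  have hp : 0 < ‖tv ρ N‖ := norm_pos_iff.2 h0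
  have hn : ‖(‖tv ρ N‖⁻¹ • tv ρ N)‖ = 1 := by simp [norm_smul, hp.ne']
  have := jointP_nonneg hρ (sg_proj _ hn) hN
  rw [jointP_smul_left, jointP_sub_left, jointP_sg, real_inner_smul_left,
    real_inner_self_eq_norm_sq] at this
  have e : ‖tv ρ N‖⁻¹ * ‖tv ρ N‖ ^ 2 = ‖tv ρ N‖ := by field_simp
  rw [e] at this
  linarith

theorem alice_decomp (M : Matrix (Fin 2) (Fin 2) ℂ) (hM : M.IsHermitian ∧ M * M = M) :
    ∃ A : ℝ × EuclideanSpace ℝ (Fin 3), IsObs A ∧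
      M = (((1 + A.1) / 2 : ℝ) : ℂ) • (1 : Matrix (Fin 2) (Fin 2) ℂ)
        + ((1 / 2 : ℝ) : ℂ) • sg A.2 := by
  obtain ⟨h1, h2⟩ := hM
  have a00 := congrFun (congrFun h1 0) 0
  have a11 := congrFun (congrFun h1 1) 1
  have a10 := congrFun (congrFun h1 1) 0
  have b00 := congrFun (congrFun h2 0) 0
  have b11 := congrFun (congrFun h2 1) 1
  have b01 := congrFun (congrFun h2 0) 1
  simp only [conjTranspose_apply, Matrix.mul_apply, Fin.sum_univ_two, Complex.ext_iff,
    RCLike.star_def, Complex.conj_re, Complex.conj_im, Complex.add_re, Complex.add_im,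
    Complex.mul_re, Complex.mul_im] at a00 a11 a10 b00 b11 b01
  obtain ⟨p, hp⟩ : ∃ p, p = (M 0 0).re := ⟨_, rfl⟩
  obtain ⟨s, hs⟩ : ∃ p, p = (M 1 1).re := ⟨_, rfl⟩
  obtain ⟨u, hu⟩ : ∃ p, p = (M 0 1).re := ⟨_, rfl⟩
  obtain ⟨v, hv⟩ : ∃ p, p = (M 0 1).im := ⟨_, rfl⟩
  have i00 : (M 0 0).im = 0 := by linarith [a00.2]
  have i11 : (M 1 1).im = 0 := by linarith [a11.2]
  have r10 : (M 1 0).re = u := by rw [hu]; exact a10.1.symm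
  have i10 : (M 1 0).im = -v := by rw [hv]; exact a10.2.symm
  rw [i00, r10, i10, ← hp, ← hu, ← hv] at b00
  rw [i11, r10, i10, ← hs, ← hu, ← hv] at b11
  rw [i00, i11, ← hs, ← hp, ← hu, ← hv] at b01
  refine ⟨(p + s - 1, !₂[2 * u, -2 * v, p - s]), ?_, ?_⟩
  · have hn := norm_sq3 !₂[2 * u, -2 * v, p - s]
    simp at hn
    simp only [IsObs]
    by_cases hps : p + s = 1
    · have : ‖!₂[2 * u, -2 * v, p - s]‖ ^ 2 = 1 := by
        rw [show s = 1 - p by linarith]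
        rw [show s = 1 - p by linarith] at hn
        simp only [neg_mul] 
        rw [hn]
        nlinarith [b00.1]
      rw [hps, sub_self, abs_zero]
      nlinarith [norm_nonneg !₂[2 * u, -2 * v, p - s]]
    · have hne : p + s - 1 ≠ 0 := fun hh => hps (by linarith)
      have hu0 : u = 0 := by
        have : (p + s - 1) * u = 0 := by linarith [b01.1]
        exact (mul_eq_zero.1 this).resolve_left hne
      have hv0 : v = 0 := by
        have : (p + s - 1) * v = 0 := by linarith [b01.2]
        exact (mul_eq_zero.1 this).resolve_left hne
      subst hu0 hv0
      have hps2 : p = s := by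
        have : (p + s - 1) * (p - s) = 0 := by linarith [b00.1, b11.1]
        linarith [(mul_eq_zero.1 this).resolve_left hne]
      have hz : !₂[2 * (0 : ℝ), -2 * 0, p - s] = 0 := by
        ext i; fin_cases i <;> simp [hps2]
      rw [hz, norm_zero, add_zero]
      have hp1 : p * p = p := by linarith [b00.1]
      rw [abs_le]
      constructor <;> nlinarith
  · ext i j
    fin_cases i <;> fin_cases j <;> simp [sg, Complex.ext_iff] 
    · rw [i00, ← hp]; constructor <;> ring
    · rw [← hu, ← hv]; constructor <;> ring
    · rw [r10, i10]; constructor <;> ring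
    · rw [i11, ← hs]; constructor <;> ring

theorem bound_fin2 {ρ : Matrix (Fin 2 × ιB) (Fin 2 × ιB) ℂ} (hρ : ρ.PosSemidef)
    (htr : Matrix.trace ρ = 1) {M : Fin 3 → Matrix (Fin 2) (Fin 2) ℂ} {N : Fin 3 → Matrix ιB ιB ℂ}
    (hM : ∀ x, (M x).IsHermitian ∧ M x * M x = M x)
    (hN : ∀ y, (N y).IsHermitian ∧ N y * N y = N y) : I3322Value ρ M N ≤ 1 / 4 := by
  have h11 : jointP ρ 1 1 = 1 := by simp [jointP, htr]
  set r := tv ρ (1 : Matrix ιB ιB ℂ) with hr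
  have hr1 : ‖r‖ ≤ 1 := by
    rw [← h11]; exact tv_norm_le hρ ⟨isHermitian_one, by simp⟩
  obtain ⟨q, hq, h⟩ : ∃ q : ℝ, 0 ≤ q ∧ q ^ 2 + ‖r‖ ^ 2 = 1 :=
    ⟨√(1 - ‖r‖ ^ 2), Real.sqrt_nonneg _, by
      rw [Real.sq_sqrt (by nlinarith [norm_nonneg r])]; ring⟩
  choose A hA hAM using fun x => alice_decomp (M x) (hM x)
  have hb : ∀ y, ∃ B : ℝ × EuclideanSpace ℝ (Fin 3), IsObs B ∧ mx r B = 2 * jointP ρ 1 (N y) - 1 ∧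
      ∀ α a, cf q r α a B.1 B.2 = α * (2 * jointP ρ 1 (N y) - 1)
        + inner ℝ a ((2 : ℝ) • tv ρ (N y) - r) := by
    intro y
    apply boost hq h
    · rw [add_sub_cancel, norm_smul, Real.norm_eq_abs, abs_of_pos (by norm_num : (0 : ℝ) < 2)]
      linarith [tv_norm_le hρ (hN y)]
    · have e : r - ((2 : ℝ) • tv ρ (N y) - r) = (2 : ℝ) • tv ρ (1 - N y) := by
        rw [tv_sub, ← hr, two_smul, two_smul]; abel
      rw [e, norm_smul, Real.norm_eq_abs, abs_of_pos (by norm_num : (0 : ℝ) < 2)]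
      have := tv_norm_le hρ (proj_compl (hN y))
      rw [jointP_sub_right, h11] at this
      linarith
  choose B hB hB1 hB2 using hb
  refine value_of_model hq h A B hA hB ?_ ?_ ?_
  · intro x
    rw [hAM x, jointP_add_left, jointP_smul_left, jointP_smul_left, jointP_sg, h11, mx, ← hr,
      real_inner_comm]
    ring
  · intro y
    rw [hB1]; ring
  · intro x y
    rw [hB1, cp, hB2, mx, inner_sub_right, real_inner_smul_right, real_inner_comm]
    nth_rw 1 [hAM x]
    rw [jointP_add_left, jointP_smul_left, jointP_smul_left, jointP_sg]
    ring

theorem bound_fin1 {ρ : Matrix (Fin 1 × ιB) (Fin 1 × ιB) ℂ} (hρ : ρ.PosSemidef)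
    (htr : Matrix.trace ρ = 1) {M : Fin 3 → Matrix (Fin 1) (Fin 1) ℂ} {N : Fin 3 → Matrix ιB ιB ℂ}
    (hM : ∀ x, (M x).IsHermitian ∧ M x * M x = M x)
    (hN : ∀ y, (N y).IsHermitian ∧ N y * N y = N y) : I3322Value ρ M N ≤ 1 / 4 := by
  have h11 : jointP ρ 1 1 = 1 := by simp [jointP, htr]
  have hm : ∀ x, ∃ m : ℝ, (m = 0 ∨ m = 1) ∧ M x = (m : ℂ) • 1 := by
    intro x
    have h := congrFun (congrFun (hM x).2 0) 0
    simp only [Matrix.mul_apply, Fin.sum_univ_one, Finset.univ_unique, Finset.sum_singleton,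
      Fin.default_eq_zero] at h
    have : M x 0 0 * (M x 0 0 - 1) = 0 := by linear_combination h
    rcases mul_eq_zero.1 this with h | h
    · refine ⟨0, Or.inl rfl, ?_⟩
      ext i j
      rw [Subsingleton.elim i 0, Subsingleton.elim j 0, h]; simp
    · refine ⟨1, Or.inr rfl, ?_⟩
      ext i j
      rw [Subsingleton.elim i 0, Subsingleton.elim j 0, sub_eq_zero.1 h]; simp
  choose m hm0 hm1 using hm
  refine value_of_model (E := ℝ) (q := 1) (r := 0) zero_le_one (by simp)
    (fun x => (2 * m x - 1, 0)) (fun y => (2 * jointP ρ 1 (N y) - 1, 0)) ?_ ?_ ?_ ?_ ?_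
  · intro x
    rcases hm0 x with h | h <;> simp [IsObs, h] <;> norm_num
  · intro y
    have h1 := jointP_nonneg hρ (G := 1) ⟨isHermitian_one, by simp⟩ (hN y)
    have h2 := jointP_nonneg hρ (G := 1) ⟨isHermitian_one, by simp⟩ (proj_compl (hN y))
    rw [jointP_sub_right, h11] at h2
    simp only [IsObs, norm_zero, add_zero]
    rw [abs_le]
    constructor <;> linarith
  · intro x
    rw [hm1, jointP_smul_left, h11]
    simp [mx]
  · intro y
    simp [mx]
  · intro x y
    rw [hm1, jointP_smul_left]
    simp [mx, cp, cf, lf]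
    ring

theorem trace_submatrix_mul {n m : Type*} [Fintype n] [Fintype m] (f : n ≃ m)
    (ρ K : Matrix m m ℂ) :
    Matrix.trace (ρ.submatrix f f * K.submatrix f f) = Matrix.trace (ρ * K) := by
  rw [submatrix_mul_equiv]
  simp only [Matrix.trace, diag_apply, submatrix_apply]
  exact f.sum_comp (fun i => (ρ * K) i i)

theorem proj_submatrix {n m : Type*} [Fintype n] [Fintype m] (f : n ≃ m) {P : Matrix m m ℂ}
    (h : P.IsHermitian ∧ P * P = P) :
    (P.submatrix f f).IsHermitian ∧ P.submatrix f f * P.submatrix f f = P.submatrix f f := by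
  refine ⟨h.1.submatrix f, ?_⟩
  rw [submatrix_mul_equiv, h.2]

theorem jointP_reindex {κ : Type*} [Fintype κ] (f : κ ≃ ιA)
    (ρ : Matrix (ιA × ιB) (ιA × ιB) ℂ) (G : Matrix ιA ιA ℂ) (N : Matrix ιB ιB ℂ) :
    jointP (ρ.submatrix (f.prodCongr (Equiv.refl ιB)) (f.prodCongr (Equiv.refl ιB)))
      (G.submatrix f f) N = jointP ρ G N := by
  unfold jointP
  rw [← trace_submatrix_mul (f.prodCongr (Equiv.refl ιB)) ρ]
  rfl

theorem value_reindex {κ : Type*} [Fintype κ] [DecidableEq κ] (f : κ ≃ ιA)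
    (ρ : Matrix (ιA × ιB) (ιA × ιB) ℂ) (M : Fin 3 → Matrix ιA ιA ℂ) (N : Fin 3 → Matrix ιB ιB ℂ) :
    I3322Value (ρ.submatrix (f.prodCongr (Equiv.refl ιB)) (f.prodCongr (Equiv.refl ιB)))
      (fun x => (M x).submatrix f f) N = I3322Value ρ M N := by
  have e1 : ∀ x, margA (ρ.submatrix (f.prodCongr (Equiv.refl ιB)) (f.prodCongr (Equiv.refl ιB)))
      ((M x).submatrix f f) = margA ρ (M x) := fun x => jointP_reindex f ρ (M x) 1
  have e2 : ∀ y, margB (ρ.submatrix (f.prodCongr (Equiv.refl ιB)) (f.prodCongr (Equiv.refl ιB)))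
      (N y) = margB ρ (N y) := fun y => by
    have := jointP_reindex f ρ 1 (N y)
    rw [submatrix_one_equiv] at this
    exact this
  unfold I3322Value
  simp only [jointP_reindex, e1, e2]

theorem trace_submatrix' {n m : Type*} [Fintype n] [Fintype m] (f : n ≃ m) (ρ : Matrix m m ℂ) :
    Matrix.trace (ρ.submatrix f f) = Matrix.trace ρ := by
  simp only [Matrix.trace, diag_apply, submatrix_apply]
  exact f.sum_comp (fun i => ρ i i)

theorem bound_left [Nonempty ιA] (hdim : Fintype.card ιA ≤ 2)
    {ρ : Matrix (ιA × ιB) (ιA × ιB) ℂ} (hρ : ρ.PosSemidef) (htr : Matrix.trace ρ = 1)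
    {M : Fin 3 → Matrix ιA ιA ℂ} {N : Fin 3 → Matrix ιB ιB ℂ}
    (hM : ∀ x, (M x).IsHermitian ∧ M x * M x = M x)
    (hN : ∀ y, (N y).IsHermitian ∧ N y * N y = N y) : I3322Value ρ M N ≤ 1 / 4 := by
  have hpos : 0 < Fintype.card ιA := Fintype.card_pos
  have hc : Fintype.card ιA = 1 ∨ Fintype.card ιA = 2 := by omega
  rcases hc with hc | hc
  · have f := (Fintype.equivFinOfCardEq hc).symm
    rw [← value_reindex f]
    exact bound_fin1 (hρ.submatrix _) (by rw [trace_submatrix', htr])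
      (fun x => proj_submatrix f (hM x)) hN
  · have f := (Fintype.equivFinOfCardEq hc).symm
    rw [← value_reindex f]
    exact bound_fin2 (hρ.submatrix _) (by rw [trace_submatrix', htr])
      (fun x => proj_submatrix f (hM x)) hN

theorem jointP_swap (ρ : Matrix (ιA × ιB) (ιA × ιB) ℂ) (G : Matrix ιA ιA ℂ) (N : Matrix ιB ιB ℂ) :
    jointP (ρ.submatrix (Equiv.prodComm ιB ιA) (Equiv.prodComm ιB ιA)) N G = jointP ρ G N := by
  unfold jointP
  rw [← trace_submatrix_mul (Equiv.prodComm ιB ιA) ρ]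
  congr 3
  ext i j
  simp [kroneckerMap_apply, mul_comm]

theorem value_swap (ρ : Matrix (ιA × ιB) (ιA × ιB) ℂ) (htr : Matrix.trace ρ = 1)
    (M : Fin 3 → Matrix ιA ιA ℂ) (N : Fin 3 → Matrix ιB ιB ℂ) :
    I3322Value (ρ.submatrix (Equiv.prodComm ιB ιA) (Equiv.prodComm ιB ιA))
      (fun x => 1 - N x) (fun y => 1 - M y) = I3322Value ρ M N := by
  have h11 : jointP ρ 1 1 = 1 := by simp [jointP, htr]
  have eA : ∀ (ρ : Matrix (ιA × ιB) (ιA × ιB) ℂ) G, margA ρ G = jointP ρ G 1 := fun _ _ => rfl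
  have eB : ∀ (ρ : Matrix (ιA × ιB) (ιA × ιB) ℂ) G, margB ρ G = jointP ρ 1 G := fun _ _ => rfl
  have eA' : ∀ (ρ : Matrix (ιB × ιA) (ιB × ιA) ℂ) G, margA ρ G = jointP ρ G 1 := fun _ _ => rfl
  have eB' : ∀ (ρ : Matrix (ιB × ιA) (ιB × ιA) ℂ) G, margB ρ G = jointP ρ 1 G := fun _ _ => rfl
  unfold I3322Value
  simp only [eA, eB, eA', eB', jointP_swap, jointP_sub_left, jointP_sub_right, h11]
  ring

end Quantum

/-- I₃₃₂₂ ≤ 1/4 is a dimension witness for qutrits: if one of the local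
dimensions is at most 2, the I₃₃₂₂ value is at most 1/4; hence any value exceeding 1/4
certifies local dimension at least 3 on both sides. -/
theorem I3322_qubit_dimension_witness
    {ιA ιB : Type*} [Fintype ιA] [Fintype ιB] [Nonempty ιA] [Nonempty ιB]
    [DecidableEq ιA] [DecidableEq ιB]
    (hdim : Fintype.card ιA ≤ 2 ∨ Fintype.card ιB ≤ 2)
    (ρ : Matrix (ιA × ιB) (ιA × ιB) ℂ) (hρ : ρ.PosSemidef) (htr : Matrix.trace ρ = 1)
    (M : Fin 3 → Matrix ιA ιA ℂ) (N : Fin 3 → Matrix ιB ιB ℂ)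
    (hM : ∀ x, (M x).IsHermitian ∧ M x * M x = M x)
    (hN : ∀ y, (N y).IsHermitian ∧ N y * N y = N y) :
    I3322Value ρ M N ≤ 1 / 4 := by

  rcases hdim with hdim | hdim
  · exact bound_left hdim hρ htr hM hN
  · rw [← value_swap ρ htr]
    exact bound_left hdim (hρ.submatrix _) (by rw [trace_submatrix', htr])
      (fun x => proj_compl (hN x)) (fun y => proj_compl (hM y))
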